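/- Define, for real z with −1 < z < 0 and t = (1+z)/2, the function F(z) = π⁴/15 + 24·[ (1/2)·Li₂(t)² − (π²/6)·Li₂(t) + 2·Li₄(t) − 2·Li₄(1−t) + 2·ln(t)·(Li₃(1−t) − ζ(3)) + (1/12)·ln⁴(1−t) + (π²/6)·ln²(1−t) + 2·Li₄(t/(t−1)) + ln(t)·ln(1−t)·( Li₂(t) − π²/2 − (1/3)·ln²(1−t) + ln(t)·ln(1−t) ) ]. Then for every such z, d/dz[ (1−z²)·F′(z) ] = −4·P₃(z) − 12·P₂(z), where P₂(z) = −2·Li₂((1−z)/2) and P₃(z) = 12·Li₃((1+z)/2) − 6·ln((1+z)/2)·Li₂((1+z)/2) − π²·ln((1+z)/2) − 12·ζ(3). -/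

import Mathlib

open Real

/-- The polylogarithm `Li s x = ∑_{k=1}^∞ x^k / k^s` for real `x` with `|x| < 1`. -/
noncomputable def Li (s : ℕ) (x : ℝ) : ℝ := ∑' k : ℕ, x ^ (k + 1) / ((k : ℝ) + 1) ^ s

/-- `ζ(3) = ∑_{k=1}^∞ 1/k³`. -/
noncomputable def zeta3 : ℝ := ∑' k : ℕ, 1 / ((k : ℝ) + 1) ^ 3

/-- The closed-form expression for `𝖯₄(z)`, with `t = (1+z)/2`. -/
noncomputable def F (z : ℝ) : ℝ :=
  let t := (1 + z) / 2
  π ^ 4 / 15 + 24 * ((1 / 2) * (Li 2 t) ^ 2 - (π ^ 2 / 6) * Li 2 t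
    + 2 * Li 4 t - 2 * Li 4 (1 - t)
    + 2 * Real.log t * (Li 3 (1 - t) - zeta3)
    + (1 / 12) * Real.log (1 - t) ^ 4 + (π ^ 2 / 6) * Real.log (1 - t) ^ 2
    + 2 * Li 4 (t / (t - 1))
    + Real.log t * Real.log (1 - t) * (Li 2 t - π ^ 2 / 2
        - (1 / 3) * Real.log (1 - t) ^ 2 + Real.log t * Real.log (1 - t)))

/-!
Put `t = (1 + z) / 2`. Differentiating the closed form once gives a combination of `1 / t` and
`1 / (1 - t)`. Landen's identity for `Li₃(t / (t - 1))` makes the coefficient of `1 / t` vanish and,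
together with Euler's reflection formula for `Li₂`, collapses the coefficient of `1 / (1 - t)`:
`(1 - z) * F'(z) = -4 * P₃(z)`. Hence `(1 - z²) * F'(z) = -4 * (1 + z) * P₃(z)`, and one more
derivative finishes the proof because `(1 + z) * P₃'(z) = 3 * P₂(z)`.
-/

open Set Filter Topology

theorem eq_of_hasDerivAt_zero {E : Type*} [NormedAddCommGroup E] [NormedSpace ℝ E]
    [CompleteSpace E] {f : ℝ → E} {a b : ℝ} (hf : ContinuousOn f (uIcc a b))
    (hf' : ∀ x ∈ uIoo a b, HasDerivAt f 0 x) : f b = f a := by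
  have hint := intervalIntegral.integral_eq_sub_of_hasDeriv_right hf
    (fun x hx => (hf' x hx).hasDerivWithinAt) intervalIntegrable_const
  simpa [eq_comm, sub_eq_zero] using hint

theorem continuousAt_log_mul_of_differentiableAt {f : ℝ → ℝ} (hf : DifferentiableAt ℝ f 0)
    (hf0 : f 0 = 0) : ContinuousAt (fun x => log x * f x) 0 := by
  have hfactor : (fun x => log x * f x) = fun x => x * log x * dslope f 0 x := by
    funext x
    have hslope : x * dslope f 0 x = f x := by simpa [hf0] using sub_smul_dslope f 0 x
    rw [← hslope]
    ring
  rw [hfactor]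
  exact continuous_mul_log.continuousAt.mul (continuousAt_dslope_same.2 hf)

theorem hasDerivAt_log_one_sub {x : ℝ} (hx : x ≠ 1) :
    HasDerivAt (fun y => log (1 - y)) (-1 / (1 - x)) x :=
  ((hasDerivAt_id' x).const_sub 1).log (sub_ne_zero.2 hx.symm)

theorem continuousOn_log_mul_log_one_sub :
    ContinuousOn (fun x => log x * log (1 - x)) (Iio 1) := by
  refine continuousOn_of_forall_continuousAt fun x hx => ?_
  rcases eq_or_ne x 0 with rfl | hx0
  · exact continuousAt_log_mul_of_differentiableAt
      (hasDerivAt_log_one_sub zero_ne_one).differentiableAt (by simp)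
  · exact (continuousAt_log hx0).mul (hasDerivAt_log_one_sub hx.ne).continuousAt

theorem abs_div_sub_one_lt_one {x : ℝ} (hx : x < 1 / 2) : |x / (x - 1)| < 1 := by
  rw [abs_div, div_lt_one (abs_pos.2 (by linarith)), ← sq_lt_sq]
  linarith

theorem abs_div_sub_one_le_one {x : ℝ} (hx : x ≤ 1 / 2) : |x / (x - 1)| ≤ 1 := by
  rw [abs_div, div_le_one (abs_pos.2 (by linarith)), ← sq_le_sq]
  linarith

theorem hasDerivAt_div_sub_one {x : ℝ} (hx : x ≠ 1) :
    HasDerivAt (fun y => y / (y - 1)) (-1 / (x - 1) ^ 2) x := by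
  refine ((hasDerivAt_id' x).fun_div ((hasDerivAt_id' x).sub_const 1)
    (sub_ne_zero.2 hx)).congr_deriv ?_
  ring

theorem Li_zero_right (s : ℕ) : Li s 0 = 0 := by
  simp [Li]

theorem Li_one {x : ℝ} (hx : |x| < 1) : Li 1 x = -log (1 - x) := by
  simpa [Li] using (hasSum_pow_div_log_of_abs_lt_one hx).tsum_eq

theorem Li_two_one : Li 2 1 = π ^ 2 / 6 := by
  simpa [Li] using ((hasSum_nat_add_iff' 1).2 hasSum_zeta_two).tsum_eq

theorem Li_three_one : Li 3 1 = zeta3 := by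
  simp [Li, zeta3]

theorem continuousOn_Li {s : ℕ} (hs : 1 < s) : ContinuousOn (Li s) (Icc (-1) 1) := by
  have hsum : Summable fun k : ℕ => 1 / ((k : ℝ) + 1) ^ s := by
    simpa using (summable_nat_add_iff 1).2 (summable_one_div_nat_pow.2 hs)
  refine continuousOn_tsum (fun k => by fun_prop) hsum fun k x hx => ?_
  rw [norm_div, norm_pow, norm_of_nonneg (by positivity : (0 : ℝ) ≤ ((k : ℝ) + 1) ^ s)]
  gcongr
  exact pow_le_one₀ (norm_nonneg x) (abs_le.2 hx)

theorem Li_eq_mul_tsum (s : ℕ) (x : ℝ) :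
    Li s x = x * ∑' k : ℕ, x ^ k / ((k : ℝ) + 1) ^ s := by
  rw [Li, ← tsum_mul_left]
  exact tsum_congr fun k => by rw [pow_succ', mul_div_assoc]

theorem hasDerivAt_pow_succ_div (s k : ℕ) (x : ℝ) :
    HasDerivAt (fun y : ℝ => y ^ (k + 1) / ((k : ℝ) + 1) ^ (s + 1))
      (x ^ k / ((k : ℝ) + 1) ^ s) x := by
  refine ((hasDerivAt_pow (k + 1) x).div_const _).congr_deriv ?_
  push_cast [Nat.add_sub_cancel]
  field_simp
  ring

theorem norm_pow_div_le_pow (s k : ℕ) {x r : ℝ} (hx : |x| ≤ r) :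
    ‖x ^ k / ((k : ℝ) + 1) ^ s‖ ≤ r ^ k := by
  have hden : 1 ≤ ((k : ℝ) + 1) ^ s := one_le_pow₀ (by simp)
  rw [norm_div, norm_pow, norm_eq_abs, norm_of_nonneg (zero_le_one.trans hden)]
  exact (div_le_self (by positivity) hden).trans (by gcongr)

theorem hasDerivAt_Li_succ (s : ℕ) {x : ℝ} (hx : |x| < 1) (hx0 : x ≠ 0) :
    HasDerivAt (Li (s + 1)) (Li s x / x) x := by
  obtain ⟨r, hxr, hr⟩ := exists_between hx
  have hr0 : 0 < r := (abs_nonneg x).trans_lt hxr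
  have hderiv : HasDerivAt (Li (s + 1)) (∑' k : ℕ, x ^ k / ((k : ℝ) + 1) ^ s) x :=
    hasDerivAt_tsum_of_isPreconnected (t := Metric.ball 0 r) (y₀ := 0)
      (summable_geometric_of_lt_one hr0.le hr) Metric.isOpen_ball
      (convex_ball 0 r).isPreconnected (fun k y _ => hasDerivAt_pow_succ_div s k y)
      (fun k y hy => norm_pow_div_le_pow s k (mem_ball_zero_iff.1 hy).le)
      (Metric.mem_ball_self hr0) (by simp) (mem_ball_zero_iff.2 hxr)
  rwa [Li_eq_mul_tsum, mul_div_cancel_left₀ _ hx0]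

theorem hasDerivAt_Li_two {x : ℝ} (hx : |x| < 1) (hx0 : x ≠ 0) :
    HasDerivAt (Li 2) (-log (1 - x) / x) x :=
  Li_one hx ▸ hasDerivAt_Li_succ 1 hx hx0

theorem hasDerivAt_Li_succ_one_sub (s : ℕ) {x : ℝ} (hx : |1 - x| < 1) (hx1 : x ≠ 1) :
    HasDerivAt (fun y => Li (s + 1) (1 - y)) (-(Li s (1 - x) / (1 - x))) x :=
  (hasDerivAt_Li_succ s hx (sub_ne_zero.2 hx1.symm)).comp_const_sub 1 x

theorem hasDerivAt_Li_succ_div_sub_one (s : ℕ) {x : ℝ} (hx : x < 1 / 2) (hx0 : x ≠ 0) :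
    HasDerivAt (fun y => Li (s + 1) (y / (y - 1))) (Li s (x / (x - 1)) / (x * (1 - x))) x := by
  have hx1 : x - 1 ≠ 0 := by linarith
  have hx1' : 1 - x ≠ 0 := by linarith
  refine ((hasDerivAt_Li_succ s (abs_div_sub_one_lt_one hx) (div_ne_zero hx0 hx1)).comp x
    (hasDerivAt_div_sub_one (sub_ne_zero.1 hx1))).congr_deriv ?_
  field_simp
  ring

theorem continuousOn_Li_div_sub_one {s : ℕ} (hs : 1 < s) :
    ContinuousOn (fun x => Li s (x / (x - 1))) (Iic (1 / 2)) := by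
  refine (continuousOn_Li hs).comp ?_ fun x hx => abs_le.1 (abs_div_sub_one_le_one hx)
  exact continuousOn_id.div (by fun_prop) fun x hx => by linarith [mem_Iic.1 hx]

theorem Li_two_div_sub_one {t : ℝ} (ht : t ∈ Icc (-1) (1 / 2)) :
    Li 2 (t / (t - 1)) = -Li 2 t - log (1 - t) ^ 2 / 2 := by
  have hsub : uIcc 0 t ⊆ Icc (-1) (1 / 2) := uIcc_subset_Icc (by norm_num) ht
  have hconst := eq_of_hasDerivAt_zero (a := 0) (b := t)
    (f := fun x => Li 2 (x / (x - 1)) + Li 2 x + log (1 - x) ^ 2 / 2) ?_ ?_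
  · simp only [zero_div, Li_zero_right, sub_zero, log_one] at hconst
    linarith
  · refine ContinuousOn.mono ?_ hsub
    refine (((continuousOn_Li_div_sub_one one_lt_two).mono Icc_subset_Iic_self).add
      ((continuousOn_Li one_lt_two).mono fun x hx => ⟨hx.1, by linarith [hx.2]⟩)).add ?_
    exact ((ContinuousOn.log (by fun_prop) fun x hx => by linarith [hx.2]).pow 2).div_const 2
  · intro x hx
    have hx0 : x ≠ 0 := fun h => left_notMem_uIoo (h ▸ hx)
    obtain ⟨hxl, hxr⟩ := uIoo_subset_Ioo (a₂ := -1) (b₂ := 1 / 2) (by norm_num) ht hx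
    have hxabs : |x| < 1 := abs_lt.2 ⟨hxl, by linarith⟩
    have hx1 : x - 1 ≠ 0 := by linarith
    have hx1' : 1 - x ≠ 0 := by linarith
    have hLi : Li 1 (x / (x - 1)) = log (1 - x) := by
      have hinv : 1 - x / (x - 1) = (1 - x)⁻¹ := by
        field_simp
        ring
      rw [Li_one (abs_div_sub_one_lt_one hxr), hinv, log_inv, neg_neg]
    refine (((hasDerivAt_Li_succ_div_sub_one 1 hxr hx0).fun_add
      (hasDerivAt_Li_two hxabs hx0)).fun_add
      (((hasDerivAt_log_one_sub (sub_ne_zero.1 hx1)).fun_pow 2).div_const 2)).congr_deriv ?_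
    rw [hLi]
    field_simp
    ring

theorem Li_two_one_sub {t : ℝ} (ht0 : 0 < t) (ht1 : t < 1) :
    Li 2 (1 - t) = π ^ 2 / 6 - log t * log (1 - t) - Li 2 t := by
  have hconst := eq_of_hasDerivAt_zero (a := 0) (b := t)
    (f := fun x => Li 2 x + Li 2 (1 - x) + log x * log (1 - x)) ?_ ?_
  · simp only [Li_zero_right, sub_zero, log_one, Li_two_one, mul_zero] at hconst
    linarith
  · rw [uIcc_of_le ht0.le]
    refine (((continuousOn_Li one_lt_two).mono ?_).add
      ((continuousOn_Li one_lt_two).comp (by fun_prop) ?_)).add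
      (continuousOn_log_mul_log_one_sub.mono fun x hx => hx.2.trans_lt ht1)
    · exact fun x hx => ⟨by linarith [hx.1], by linarith [hx.2]⟩
    · exact fun x hx => ⟨by linarith [hx.2], by linarith [hx.1]⟩
  · rw [uIoo_of_lt ht0]
    rintro x ⟨hx0, hxt⟩
    have hx1 : 1 - x ≠ 0 := by linarith
    have hxabs : |x| < 1 := abs_lt.2 ⟨by linarith, by linarith⟩
    have hxabs' : |1 - x| < 1 := abs_lt.2 ⟨by linarith, by linarith⟩
    refine (((hasDerivAt_Li_two hxabs hx0.ne').fun_add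
      (hasDerivAt_Li_succ_one_sub 1 hxabs' (by linarith))).fun_add
      ((hasDerivAt_log hx0.ne').fun_mul (hasDerivAt_log_one_sub (by linarith)))).congr_deriv ?_
    rw [Li_one hxabs', sub_sub_cancel]
    field_simp
    ring

theorem Li_three_div_sub_one {t : ℝ} (ht0 : 0 < t) (ht1 : t ≤ 1 / 2) :
    Li 3 (t / (t - 1)) = zeta3 - Li 3 t - Li 3 (1 - t) + log (1 - t) ^ 3 / 6
      + π ^ 2 / 6 * log (1 - t) - log t * log (1 - t) ^ 2 / 2 := by
  have hconst := eq_of_hasDerivAt_zero (a := 0) (b := t)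
    (f := fun x => Li 3 (x / (x - 1)) + Li 3 x + Li 3 (1 - x) - log (1 - x) ^ 3 / 6
      - π ^ 2 / 6 * log (1 - x) + log x * log (1 - x) * log (1 - x) / 2) ?_ ?_
  · simp only [zero_div, Li_zero_right, sub_zero, log_one, Li_three_one] at hconst
    linarith
  · rw [uIcc_of_le ht0.le]
    have hlog : ContinuousOn (fun x => log (1 - x)) (Icc 0 t) :=
      ContinuousOn.log (by fun_prop) fun x hx => by linarith [hx.2]
    have hLi := continuousOn_Li (s := 3) (by norm_num)
    refine (((((continuousOn_Li_div_sub_one (by norm_num)).mono ?_).add (hLi.mono ?_)).add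
      (hLi.comp (by fun_prop) ?_)).sub ((hlog.pow 3).div_const 6)).sub
      (hlog.const_mul (π ^ 2 / 6)) |>.add
      (((continuousOn_log_mul_log_one_sub.mono ?_).mul hlog).div_const 2)
    · exact fun x hx => hx.2.trans ht1
    · exact fun x hx => ⟨by linarith [hx.1], by linarith [hx.2]⟩
    · exact fun x hx => ⟨by linarith [hx.2], by linarith [hx.1]⟩
    · exact fun x hx => hx.2.trans_lt (by linarith)
  · rw [uIoo_of_lt ht0]
    rintro x ⟨hx0, hxt⟩
    have hx1 : 1 - x ≠ 0 := by linarith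
    have hxabs : |x| < 1 := abs_lt.2 ⟨by linarith, by linarith⟩
    have hxabs' : |1 - x| < 1 := abs_lt.2 ⟨by linarith, by linarith⟩
    have hM := hasDerivAt_log_one_sub (x := x) (by linarith)
    refine ((((((hasDerivAt_Li_succ_div_sub_one 2 (by linarith) hx0.ne').fun_add
      (hasDerivAt_Li_succ 2 hxabs hx0.ne')).fun_add
      (hasDerivAt_Li_succ_one_sub 2 hxabs' (by linarith))).fun_sub
      ((hM.fun_pow 3).div_const 6)).fun_sub (hM.const_mul (π ^ 2 / 6))).fun_add
      ((((hasDerivAt_log hx0.ne').fun_mul hM).fun_mul hM).div_const 2)).congr_deriv ?_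
    rw [Li_two_div_sub_one ⟨by linarith, by linarith⟩, Li_two_one_sub hx0 (by linarith)]
    field_simp
    ring

/-- The second derivative `𝖯₂(z)` of the Legendre function `P_ν(z)` with respect to `ν` at
`ν = 0`, in closed form. -/
noncomputable def legendreP₂ (z : ℝ) : ℝ := -2 * Li 2 ((1 - z) / 2)

/-- The third derivative `𝖯₃(z)` of the Legendre function `P_ν(z)` with respect to `ν` at
`ν = 0`, in closed form. -/
noncomputable def legendreP₃ (z : ℝ) : ℝ :=
  12 * Li 3 ((1 + z) / 2) - 6 * log ((1 + z) / 2) * Li 2 ((1 + z) / 2)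
    - π ^ 2 * log ((1 + z) / 2) - 12 * zeta3

/-- The bracket in the closed form of `F`, as a function of `t = (1 + z) / 2`, so that
`F z = π ^ 4 / 15 + 24 * bracketF ((1 + z) / 2)`. The three terms in `Li 4` are put together; the
other terms keep their order. -/
noncomputable def bracketF (t : ℝ) : ℝ :=
  (1 / 2 * Li 2 t ^ 2 - π ^ 2 / 6 * Li 2 t)
    + (2 * Li 4 t - 2 * Li 4 (1 - t) + 2 * Li 4 (t / (t - 1)))
    + 2 * log t * (Li 3 (1 - t) - zeta3)
    + (1 / 12 * log (1 - t) ^ 4 + π ^ 2 / 6 * log (1 - t) ^ 2)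
    + log t * log (1 - t) * (Li 2 t - π ^ 2 / 2 - 1 / 3 * log (1 - t) ^ 2 + log t * log (1 - t))

theorem F_eq_bracketF : F = fun z => π ^ 4 / 15 + 24 * bracketF ((1 + z) / 2) := by
  funext z
  simp only [F, bracketF]
  ring

theorem hasDerivAt_one_add_div_two (z : ℝ) : HasDerivAt (fun z : ℝ => (1 + z) / 2) (1 / 2) z :=
  ((hasDerivAt_id' z).const_add 1).div_const 2

theorem hasDerivAt_legendreP₃ {z : ℝ} (hz : z ∈ Ioo (-1) 1) :
    HasDerivAt legendreP₃ (3 * legendreP₂ z / (1 + z)) z := by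
  obtain ⟨hz1, hz2⟩ := hz
  set t := (1 + z) / 2 with ht
  have ht0 : 0 < t := by linarith
  have ht1 : t < 1 := by linarith
  have htabs : |t| < 1 := abs_lt.2 ⟨by linarith, ht1⟩
  have hL := hasDerivAt_log ht0.ne'
  have hP := ((((hasDerivAt_Li_succ 2 htabs ht0.ne').const_mul 12).fun_sub
    ((hL.const_mul 6).fun_mul (hasDerivAt_Li_two htabs ht0.ne'))).fun_sub
    (hL.const_mul (π ^ 2))).sub_const (12 * zeta3)
  refine (hP.comp z (hasDerivAt_one_add_div_two z)).congr_deriv ?_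
  rw [legendreP₂, show (1 - z) / 2 = 1 - t by ring, Li_two_one_sub ht0 ht1,
    show 1 + z = 2 * t by ring]
  field_simp
  ring

theorem hasDerivAt_bracketF_partialFractions {t : ℝ} (ht0 : 0 < t) (ht1 : t < 1 / 2) :
    HasDerivAt bracketF
      (2 * (Li 3 (t / (t - 1)) + Li 3 t + Li 3 (1 - t) - zeta3 - log (1 - t) ^ 3 / 6
          - π ^ 2 / 6 * log (1 - t) + log t * log (1 - t) ^ 2 / 2) / t
        + (2 * (Li 3 (t / (t - 1)) + Li 3 (1 - t)) - log (1 - t) ^ 3 / 3 - π ^ 2 / 3 * log (1 - t)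
          + log t * log (1 - t) ^ 2 - 2 * log t * (log t * log (1 - t) + Li 2 (1 - t))
          - log t * (Li 2 t - π ^ 2 / 2)) / (1 - t)) t := by
  have hs : 1 - t ≠ 0 := by linarith
  have htabs : |t| < 1 := abs_lt.2 ⟨by linarith, by linarith⟩
  have hsabs : |1 - t| < 1 := abs_lt.2 ⟨by linarith, by linarith⟩
  have ht1' : t ≠ 1 := by linarith
  have hL := hasDerivAt_log ht0.ne'
  have hM := hasDerivAt_log_one_sub ht1'
  have hA := hasDerivAt_Li_two htabs ht0.ne'
  have hdilog := ((hA.fun_pow 2).const_mul (1 / 2)).fun_sub (hA.const_mul (π ^ 2 / 6))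
  have htetralog := (((hasDerivAt_Li_succ 3 htabs ht0.ne').const_mul 2).fun_sub
    ((hasDerivAt_Li_succ_one_sub 3 hsabs ht1').const_mul 2)).fun_add
    ((hasDerivAt_Li_succ_div_sub_one 3 ht1 ht0.ne').const_mul 2)
  have htrilog := (hL.const_mul 2).fun_mul
    ((hasDerivAt_Li_succ_one_sub 2 hsabs ht1').sub_const zeta3)
  have hlog := ((hM.fun_pow 4).const_mul (1 / 12)).fun_add ((hM.fun_pow 2).const_mul (π ^ 2 / 6))
  have hmixed := (hL.fun_mul hM).fun_mul (((hA.sub_const (π ^ 2 / 2)).fun_sub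
    ((hM.fun_pow 2).const_mul (1 / 3))).fun_add (hL.fun_mul hM))
  refine ((((hdilog.fun_add htetralog).fun_add htrilog).fun_add hlog).fun_add
    hmixed).congr_deriv ?_
  field_simp
  ring

theorem hasDerivAt_bracketF {t : ℝ} (ht0 : 0 < t) (ht1 : t < 1 / 2) :
    HasDerivAt bracketF ((2 * zeta3 - 2 * Li 3 t + log t * Li 2 t + π ^ 2 / 6 * log t) / (1 - t))
      t := by
  refine (hasDerivAt_bracketF_partialFractions ht0 ht1).congr_deriv ?_
  rw [Li_three_div_sub_one ht0 ht1.le, Li_two_one_sub ht0 (by linarith)]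
  ring

theorem hasDerivAt_F {z : ℝ} (hz : z ∈ Ioo (-1) 0) :
    HasDerivAt F (-4 * legendreP₃ z / (1 - z)) z := by
  obtain ⟨hz1, hz0⟩ := hz
  have hbracket := (hasDerivAt_bracketF (t := (1 + z) / 2) (by linarith) (by linarith)).comp z
    (hasDerivAt_one_add_div_two z)
  rw [F_eq_bracketF]
  refine ((hbracket.const_mul 24).const_add (π ^ 4 / 15)).congr_deriv ?_
  have hz' : 1 - z ≠ 0 := by linarith
  rw [legendreP₃, show 1 - (1 + z) / 2 = (1 - z) / 2 by ring]
  field_simp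
  ring

theorem one_sub_sq_mul_deriv_F {z : ℝ} (hz : z ∈ Ioo (-1) 0) :
    (1 - z ^ 2) * deriv F z = -4 * ((1 + z) * legendreP₃ z) := by
  have hz' : 1 - z ≠ 0 := by linarith [hz.2]
  rw [(hasDerivAt_F hz).deriv]
  field_simp
  ring

theorem hasDerivAt_one_add_mul_legendreP₃ {z : ℝ} (hz : z ∈ Ioo (-1) 1) :
    HasDerivAt (fun z => (1 + z) * legendreP₃ z) (legendreP₃ z + 3 * legendreP₂ z) z := by
  have hz' : 1 + z ≠ 0 := by linarith [hz.1]
  refine (((hasDerivAt_id' z).const_add 1).fun_mul (hasDerivAt_legendreP₃ hz)).congr_deriv ?_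
  rw [one_mul, mul_div_cancel₀ _ hz']

theorem stmt_6 (z : ℝ) (h1 : -1 < z) (h2 : z < 0) :
    HasDerivAt (fun z : ℝ => (1 - z ^ 2) * deriv F z)
      (-4 * (12 * Li 3 ((1 + z) / 2) - 6 * Real.log ((1 + z) / 2) * Li 2 ((1 + z) / 2)
          - π ^ 2 * Real.log ((1 + z) / 2) - 12 * zeta3)
        - 12 * (-2 * Li 2 ((1 - z) / 2))) z := by
  have hflux : (fun z : ℝ => (1 - z ^ 2) * deriv F z) =ᶠ[𝓝 z]
      fun z => -4 * ((1 + z) * legendreP₃ z) := by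
    filter_upwards [Ioo_mem_nhds h1 h2] with y hy using one_sub_sq_mul_deriv_F hy
  have hderiv : HasDerivAt (fun z => -4 * ((1 + z) * legendreP₃ z))
      (-4 * (legendreP₃ z + 3 * legendreP₂ z)) z :=
    (hasDerivAt_one_add_mul_legendreP₃ ⟨h1, by linarith⟩).const_mul (-4)
  refine (hderiv.congr_of_eventuallyEq hflux).congr_deriv ?_
  rw [legendreP₂, legendreP₃]
  ring
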